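/- arXiv:math/0702594 — 2 statements merged into one kernel-verified Lean document; each statement's English description precedes it below -/
import Mathlib

section
/- The centralizer of the torus T_M = ⟨x₁D₁, x₂D₂⟩_F inside the Melikian algebra M equals C_M = T_M ⊕ F·(x₁²x₂²) ⊕ F·(x₁⁴x₂³D̃₁) ⊕ F·(x₁³x₂⁴D̃₂); in particular it has dimension 5 and is a Cartan subalgebra of M. -/
/-!
Every element `T = p x₁D₁ + q x₂D₂` of the torus acts diagonally on the monomial basis of `M`: on
`x^a` it has eigenvalue `p a₁ + q a₂`, shifted in each of the five summands `A(2)`, `A(2)D₁`,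
`A(2)D₂`, `A(2)D̃₁`, `A(2)D̃₂` by a constant depending on `T`. In characteristic `5` the shift is
minus the eigenvalue of one monomial, namely `x₁²x₂²`, `x₁`, `x₂`, `x₁⁴x₂³`, `x₁³x₂⁴` respectively,
and two monomials of `A(2)` with the same eigenvalue for every `T` coincide. Hence the weight-zero
space of the torus is `C_M`. A diagonal operator has the same kernel as its square, so an element
that the torus carries into its centralizer `C_M` already lies in `C_M`. Finally `C_M` is abelian:
the torus centralizes it, and in the brackets of the remaining generators every product has an
exponent above `4` or cancels by commutativity.
-/

open scoped BigOperators

namespace Melikian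

/-- Index set for monomials in the truncated polynomial algebra
`A(2) = F[x₁,x₂]/(x₁⁵,x₂⁵)`. -/
abbrev Idx : Type := Fin 5 × Fin 5

/-- The truncated polynomial algebra `A(2)`, as functions on monomial exponents. -/
abbrev A (F : Type*) [Field F] : Type _ := Idx → F

variable {F : Type*} [Field F]

/-- The monomial `x^b = x₁^{b₁} x₂^{b₂}`. -/
def X (b : Idx) : A F := fun a => if a = b then 1 else 0

/-- Truncated multiplication of `A(2)`. -/
def mulA (f g : A F) : A F := fun a =>
  ∑ b : Idx, ∑ c : Idx,
    if b.1.val + c.1.val = a.1.val ∧ b.2.val + c.2.val = a.2.val then f b * g c else 0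

/-- Partial derivative `∂/∂x₁` on `A(2)`. -/
def d1 (f : A F) : A F := fun a =>
  if h : a.1.val + 1 < 5 then ((a.1.val + 1 : ℕ) : F) * f (⟨a.1.val + 1, h⟩, a.2) else 0

/-- Partial derivative `∂/∂x₂` on `A(2)`. -/
def d2 (f : A F) : A F := fun a =>
  if h : a.2.val + 1 < 5 then ((a.2.val + 1 : ℕ) : F) * f (a.1, ⟨a.2.val + 1, h⟩) else 0

/-- The Witt–Jacobson algebra `W(2)` as a free `A(2)`-module with basis `D₁, D₂`:
an element `(f₁, f₂)` stands for `f₁D₁ + f₂D₂`. -/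
abbrev W (F : Type*) [Field F] : Type _ := A F × A F

/-- Action of a derivation `D = f₁D₁+f₂D₂ ∈ W(2)` on `A(2)`. -/
def Dw (D : W F) (g : A F) : A F := mulA D.1 (d1 g) + mulA D.2 (d2 g)

/-- Divergence `div(f₁D₁+f₂D₂) = D₁(f₁) + D₂(f₂)`. -/
def divW (D : W F) : A F := d1 D.1 + d2 D.2

/-- The usual bracket of `W(2)`. -/
def brW (D E : W F) : W F := (Dw D E.1 - Dw E D.1, Dw D E.2 - Dw E D.2)

/-- Multiplication of an element of `W(2)` by a truncated polynomial. -/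
def smulA (f : A F) (D : W F) : W F := (mulA f D.1, mulA f D.2)

/-- The Melikian algebra `M = A(2) ⊕ W(2) ⊕ W(2)~` as an `F`-vector space. -/
abbrev Mel (F : Type*) [Field F] : Type _ := A F × W F × W F

/-- Inclusion of `A(2)` into `M`. -/
def ιA (f : A F) : Mel F := (f, 0, 0)

/-- Inclusion of `W(2)` into `M`. -/
def ιW (D : W F) : Mel F := (0, D, 0)

/-- Inclusion of the second copy `W(2)~` into `M`, `D ↦ D̃`. -/
def ιT (D : W F) : Mel F := (0, 0, D)

/-- The Melikian bracket on `M = A(2) ⊕ W(2) ⊕ W(2)~`, defined by the rules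
`[D,Ẽ] = [D,E]~ + 2 div(D) Ẽ`, `[D,f] = D(f) − 2 div(D) f`,
`[f₁D̃₁+f₂D̃₂, g₁D̃₁+g₂D̃₂] = f₁g₂ − f₂g₁`, `[f,Ẽ] = fE`,
`[f,g] = 2(gD₂(f) − fD₂(g))D̃₁ + 2(fD₁(g) − gD₁(f))D̃₂`,
extended bilinearly and antisymmetrically (with the standard bracket on `W(2)`). -/
def brM (u v : Mel F) : Mel F :=
  ( (Dw u.2.1 v.1 - (2 : F) • mulA (divW u.2.1) v.1)
      - (Dw v.2.1 u.1 - (2 : F) • mulA (divW v.2.1) u.1)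
      + (mulA u.2.2.1 v.2.2.2 - mulA u.2.2.2 v.2.2.1)
  , brW u.2.1 v.2.1 + smulA u.1 v.2.2 - smulA v.1 u.2.2
  , (brW u.2.1 v.2.2 + (2 : F) • smulA (divW u.2.1) v.2.2)
      - (brW v.2.1 u.2.2 + (2 : F) • smulA (divW v.2.1) u.2.2)
      + ((2 : F) • (mulA v.1 (d2 u.1) - mulA u.1 (d2 v.1)),
         (2 : F) • (mulA u.1 (d1 v.1) - mulA v.1 (d1 u.1))) )

/-- `x^b D_i` as an element of `W(2)` (`i = 0` stands for `D₁`, `i = 1` for `D₂`). -/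
def wOf (i : Fin 2) (b : Idx) : W F := if i = 0 then (X b, 0) else (0, X b)

/-- The element `x₁D₁ ∈ M`. -/
def x1D1 : Mel F := ιW (X (1, 0), 0)

/-- The element `x₂D₂ ∈ M`. -/
def x2D2 : Mel F := ιW (0, X (0, 1))

/-- The element `1 ∈ A(2) ⊂ M`. -/
def oneM : Mel F := ιA (X (0, 0))

/-- The element `D_{i+1} ∈ W(2) ⊂ M`. -/
def DD (i : Fin 2) : Mel F := ιW (wOf i (0, 0))

/-- The element `D̃_{i+1} ∈ W(2)~ ⊂ M`. -/
def TT (i : Fin 2) : Mel F := ιT (wOf i (0, 0))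

/-- Total degree of a monomial exponent. -/
def degA (b : Idx) : ℤ := (b.1.val : ℤ) + (b.2.val : ℤ)

/-- The degree-`d` piece `M_d` of the `ℤ`-grading of the Melikian algebra:
`deg_M(f) = 3 deg(f) − 2` on `A(2)`, `deg_M(x^bD_i) = 3(|b|−1)` on `W(2)`, and
`deg_M(x^bD̃_i) = 3(|b|−1)+2` on `W(2)~`. -/
def Md (d : ℤ) : Submodule F (Mel F) :=
  Submodule.span F
    ( {m | ∃ b : Idx, m = ιA (X b) ∧ d = 3 * degA b - 2}
      ∪ {m | ∃ b : Idx, ∃ i : Fin 2, m = ιW (wOf i b) ∧ d = 3 * (degA b - 1)}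
      ∪ {m | ∃ b : Idx, ∃ i : Fin 2, m = ιT (wOf i b) ∧ d = 3 * (degA b - 1) + 2} )

/-- The part `M_{≥ d}` of the Melikian algebra. -/
def Mge (d : ℤ) : Submodule F (Mel F) := ⨆ e : ℤ, ⨆ _ : d ≤ e, (Md e : Submodule F (Mel F))

/-- The squaring `Sq(γ)(x,y) = Σ_{k=1}^{4} [γ^k(x), γ^{5−k}(y)] / (k!(5−k)!)`
of an operator `γ` on the Melikian algebra (characteristic 5). -/
def melSq (γ : Mel F → Mel F) (x y : Mel F) : Mel F :=
  ∑ k ∈ Finset.Icc 1 4,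
    ((Nat.factorial k * Nat.factorial (5 - k) : ℕ) : F)⁻¹ • brM (γ^[k] x) (γ^[5 - k] y)

/-- The Chevalley–Eilenberg coboundary of a linear 1-cochain of `M` with values in the
adjoint representation. -/
def cob (g : Mel F →ₗ[F] Mel F) (x y : Mel F) : Mel F :=
  brM x (g y) - brM y (g x) - g (brM x y)


/-- The canonical Cartan subalgebra
`C_M = T_M ⊕ F·(x₁²x₂²) ⊕ F·(x₁⁴x₂³D̃₁) ⊕ F·(x₁³x₂⁴D̃₂)` of the Melikian algebra. -/
def CM (F : Type*) [Field F] : Submodule F (Mel F) :=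
  Submodule.span F
    {x1D1, x2D2, ιA (X (2, 2)), ιT (X (4, 3), 0), ιT (0, X (3, 4))}

theorem mul_eq_zero_of_mul_mul_eq_zero {R : Type*} [CommMonoidWithZero R] [IsReduced R]
    {a b : R} (h : a * (a * b) = 0) : a * b = 0 := by
  refine eq_zero_of_pow_eq_zero (n := 2) ?_
  rw [sq, mul_left_comm, ← mul_assoc, h, zero_mul]

section TruncatedPolynomials

theorem mulA_comm (f g : A F) : mulA f g = mulA g f := by
  funext a
  unfold mulA
  rw [Finset.sum_comm]
  simp only [add_comm, mul_comm]

theorem mulA_add_left (f g h : A F) : mulA (f + g) h = mulA f h + mulA g h := by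
  funext a
  simp only [mulA, Pi.add_apply, ← Finset.sum_add_distrib, add_mul]
  refine Finset.sum_congr rfl fun b _ => Finset.sum_congr rfl fun c _ => ?_
  split_ifs <;> simp only [add_zero]

theorem mulA_add_right (f g h : A F) : mulA f (g + h) = mulA f g + mulA f h := by
  simp only [mulA_comm f, mulA_add_left]

theorem mulA_smul_left (r : F) (f g : A F) : mulA (r • f) g = r • mulA f g := by
  funext a
  simp only [mulA, Pi.smul_apply, smul_eq_mul, Finset.mul_sum, mul_ite, mul_zero, mul_assoc]

theorem mulA_smul_right (r : F) (f g : A F) : mulA f (r • g) = r • mulA f g := by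
  simp only [mulA_comm f, mulA_smul_left]

@[simp]
theorem zero_mulA (f : A F) : mulA 0 f = 0 := by
  simpa using mulA_smul_left 0 0 f

@[simp]
theorem mulA_zero (f : A F) : mulA f 0 = 0 := by
  rw [mulA_comm, zero_mulA]

theorem d1_add (f g : A F) : d1 (f + g) = d1 f + d1 g := by
  funext a
  by_cases h : a.1.val + 1 < 5 <;> simp [d1, h, mul_add]

theorem d2_add (f g : A F) : d2 (f + g) = d2 f + d2 g := by
  funext a
  by_cases h : a.2.val + 1 < 5 <;> simp [d2, h, mul_add]

theorem d1_smul (r : F) (f : A F) : d1 (r • f) = r • d1 f := by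
  funext a
  simp only [d1, Pi.smul_apply, smul_eq_mul, mul_dite, mul_zero, mul_left_comm]

theorem d2_smul (r : F) (f : A F) : d2 (r • f) = r • d2 f := by
  funext a
  simp only [d2, Pi.smul_apply, smul_eq_mul, mul_dite, mul_zero, mul_left_comm]

@[simp]
theorem d1_zero : d1 (0 : A F) = 0 := by
  simpa using d1_smul (0 : F) 0

@[simp]
theorem d2_zero : d2 (0 : A F) = 0 := by
  simpa using d2_smul (0 : F) 0

theorem X_ne_zero (b : Idx) : (X b : A F) ≠ 0 := fun h => by
  simpa [X] using congrFun h b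

theorem mulA_X_apply (b a : Idx) (f : A F) :
    mulA (X b) f a = if b ≤ a then f (a - b) else 0 := by
  have exponents (c : Idx) : (b.1.val + c.1.val = a.1.val ∧ b.2.val + c.2.val = a.2.val) ↔
      b ≤ a ∧ c = a - b := by
    have h : ∀ i j k : Fin 5, i.val + j.val = k.val ↔ i ≤ k ∧ j = k - i := by decide
    rw [h, h, Prod.le_def, Prod.ext_iff, Prod.fst_sub, Prod.snd_sub]
    tauto
  unfold mulA
  rw [Finset.sum_eq_single b (fun c _ hc => by simp [X, hc]) (by simp)]
  by_cases h : b ≤ a <;> simp [exponents, X, h]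

@[simp]
theorem mulA_X_zero (f : A F) : mulA f (X (0, 0)) = f := by
  funext a
  simp [mulA_comm f, mulA_X_apply, Prod.le_def, ← Prod.zero_eq_mk]

theorem mulA_X_X_eq_zero {b c : Idx}
    (h : 5 ≤ b.1.val + c.1.val ∨ 5 ≤ b.2.val + c.2.val) : mulA (X b) (X c : A F) = 0 := by
  funext a
  have ha₁ := a.1.isLt
  have ha₂ := a.2.isLt
  refine Finset.sum_eq_zero fun i _ => Finset.sum_eq_zero fun j _ => ?_
  by_cases hi : i = b <;> by_cases hj : j = c <;> simp [X, hi, hj]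
  omega

@[simp]
theorem d1_X_zero (j : Fin 5) : d1 (X (0, j) : A F) = 0 := by
  funext ⟨a, b⟩
  fin_cases a <;> simp [d1, X]

@[simp]
theorem d2_X_zero (i : Fin 5) : d2 (X (i, 0) : A F) = 0 := by
  funext ⟨a, b⟩
  fin_cases b <;> simp [d2, X]

@[simp]
theorem d1_X_one (j : Fin 5) : d1 (X (1, j) : A F) = X (0, j) := by
  funext ⟨a, b⟩
  fin_cases a <;> simp [d1, X]

@[simp]
theorem d2_X_one (i : Fin 5) : d2 (X (i, 1) : A F) = X (i, 0) := by
  funext ⟨a, b⟩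
  fin_cases b <;> simp [d2, X]

theorem mulA_X_d1_apply (f : A F) (a : Idx) :
    mulA (X (1, 0)) (d1 f) a = (a.1.val : F) * f a := by
  obtain ⟨i, j⟩ := a
  rw [mulA_X_apply]
  fin_cases i <;> simp [d1]

theorem mulA_X_d2_apply (f : A F) (a : Idx) :
    mulA (X (0, 1)) (d2 f) a = (a.2.val : F) * f a := by
  obtain ⟨i, j⟩ := a
  rw [mulA_X_apply]
  fin_cases j <;> simp [d2]

end TruncatedPolynomials

section Bracket

theorem Dw_add_left (D E : W F) (f : A F) : Dw (D + E) f = Dw D f + Dw E f := by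
  simp only [Dw, Prod.fst_add, Prod.snd_add, mulA_add_left]
  abel

theorem Dw_add_right (D : W F) (f g : A F) : Dw D (f + g) = Dw D f + Dw D g := by
  simp only [Dw, d1_add, d2_add, mulA_add_right]
  abel

theorem divW_add (D E : W F) : divW (D + E) = divW D + divW E := by
  simp only [divW, Prod.fst_add, Prod.snd_add, d1_add, d2_add]
  abel

theorem brW_add_left (D D' E : W F) : brW (D + D') E = brW D E + brW D' E := by
  simp only [brW, Prod.fst_add, Prod.snd_add, Dw_add_left, Dw_add_right, Prod.mk_add_mk]
  congr 1 <;> abel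

theorem brW_swap (D E : W F) : brW E D = -brW D E := by
  simp only [brW, Prod.neg_mk, neg_sub]

theorem brW_add_right (D E E' : W F) : brW D (E + E') = brW D E + brW D E' := by
  rw [brW_swap, brW_add_left, neg_add, ← brW_swap, ← brW_swap]

theorem smulA_add_left (f g : A F) (D : W F) : smulA (f + g) D = smulA f D + smulA g D := by
  simp only [smulA, mulA_add_left, Prod.mk_add_mk]

theorem smulA_add_right (f : A F) (D E : W F) : smulA f (D + E) = smulA f D + smulA f E := by
  simp only [smulA, Prod.fst_add, Prod.snd_add, mulA_add_right, Prod.mk_add_mk]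

theorem brM_add_left (u u' v : Mel F) : brM (u + u') v = brM u v + brM u' v := by
  simp only [brM, Prod.fst_add, Prod.snd_add, Dw_add_left, Dw_add_right, divW_add, brW_add_left,
    brW_add_right, smulA_add_left, smulA_add_right, mulA_add_left, mulA_add_right, d1_add, d2_add]
  refine Prod.ext ?_ (Prod.ext ?_ (Prod.ext ?_ ?_)) <;>
    simp only [smul_add, Prod.fst_add, Prod.snd_add, Prod.fst_sub, Prod.snd_sub, Prod.smul_fst,
      Prod.smul_snd, Prod.mk_add_mk] <;>
    module

theorem brM_swap (u v : Mel F) : brM v u = -brM u v := by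
  rw [brM, brM, brW_swap u.2.1, mulA_comm v.2.2.1, mulA_comm v.2.2.2]
  refine Prod.ext ?_ (Prod.ext ?_ (Prod.ext ?_ ?_)) <;>
    simp only [Prod.fst_add, Prod.snd_add, Prod.fst_sub, Prod.snd_sub, Prod.smul_fst,
      Prod.smul_snd, Prod.fst_neg, Prod.snd_neg] <;>
    module

theorem brM_ιA_add_ιT (f g : A F) (D E : W F) :
    brM (ιA f + ιT D) (ιA g + ιT E) =
      (mulA D.1 E.2 - mulA D.2 E.1, smulA f E - smulA g D,
        ((2 : F) • (mulA g (d2 f) - mulA f (d2 g)),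
          (2 : F) • (mulA f (d1 g) - mulA g (d1 f)))) := by
  simp [brM, ιA, ιT, brW, Dw, divW, smulA]

theorem brM_ιW (D : W F) (m : Mel F) :
    brM (ιW D) m =
      (Dw D m.1 - (2 : F) • mulA (divW D) m.1, brW D m.2.1,
        brW D m.2.2 + (2 : F) • smulA (divW D) m.2.2) := by
  simp [brM, ιW, brW, Dw, divW, smulA]

end Bracket

section Torus

/-- The Euler derivation `p x₁D₁ + q x₂D₂`, the general element of the torus `T_M` seen in
`W(2)`. -/
def euler (p q : F) : W F := (p • X (1, 0), q • X (0, 1))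

/-- The eigenvalue `p a₁ + q a₂` of `euler p q` on the monomial `x^a`, as a function of `a`. -/
def monomialWeight (p q : F) : A F := fun a => p * a.1.val + q * a.2.val

/-- The eigenvalues of `ad (p x₁D₁ + q x₂D₂)` on the monomial basis of `M`, as a family indexed by
that basis. The diagonal operator is then `torusWeight p q * ·` for the coordinatewise product of
`M`, which is not to be confused with the product `mulA` of `A(2)`. -/
def torusWeight (p q : F) : Mel F :=
  (monomialWeight p q - (2 * (p + q)) • 1,
    (monomialWeight p q - p • 1, monomialWeight p q - q • 1),
    (monomialWeight p q - p • 1 + (2 * (p + q)) • 1,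
      monomialWeight p q - q • 1 + (2 * (p + q)) • 1))

theorem ιW_euler_one_zero : ιW (euler (1 : F) 0) = x1D1 := by
  simp [euler, x1D1]

theorem ιW_euler_zero_one : ιW (euler (0 : F) 1) = x2D2 := by
  simp [euler, x2D2]

theorem Dw_euler (p q : F) (f : A F) : Dw (euler p q) f = monomialWeight p q * f := by
  funext a
  simp only [Dw, euler, monomialWeight, mulA_smul_left, Pi.add_apply, Pi.smul_apply, Pi.mul_apply,
    mulA_X_d1_apply, mulA_X_d2_apply, smul_eq_mul]
  ring

theorem divW_euler (p q : F) : divW (euler p q) = (p + q) • X (0, 0) := by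
  simp [divW, euler, d1_smul, d2_smul, add_smul]

theorem brW_euler (p q : F) (D : W F) :
    brW (euler p q) D =
      (monomialWeight p q - p • 1, monomialWeight p q - q • 1) * D := by
  have Dw_left_fst : Dw D (euler p q).1 = p • D.1 := by
    simp [Dw, euler, d1_smul, d2_smul, mulA_smul_right]
  have Dw_left_snd : Dw D (euler p q).2 = q • D.2 := by
    simp [Dw, euler, d1_smul, d2_smul, mulA_smul_right]
  simp [brW, Dw_euler, Dw_left_fst, Dw_left_snd, sub_mul, Prod.ext_iff]

theorem smulA_divW_euler (p q : F) (D : W F) : smulA (divW (euler p q)) D = (p + q) • D := by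
  simp [smulA, divW_euler, mulA_comm (_ • _), mulA_smul_right, Prod.ext_iff]

theorem brM_ιW_euler (p q : F) (m : Mel F) :
    brM (ιW (euler p q)) m = torusWeight p q * m := by
  rw [brM_ιW, Dw_euler, brW_euler, brW_euler, smulA_divW_euler, divW_euler, mulA_comm (_ • _)]
  simp [torusWeight, mulA_smul_right, Prod.ext_iff, sub_mul, add_mul, mul_smul]

theorem torusWeight_eq_smul_add_smul (p q : F) :
    torusWeight p q = p • torusWeight 1 0 + q • torusWeight 0 1 := by
  have monomialWeight_eq :
      monomialWeight p q = p • monomialWeight 1 0 + q • monomialWeight 0 1 := by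
    funext a
    simp [monomialWeight]
  simp only [torusWeight, monomialWeight_eq, Prod.smul_mk, Prod.mk_add_mk]
  refine Prod.ext ?_ (Prod.ext (Prod.ext ?_ ?_) (Prod.ext ?_ ?_)) <;> module

end Torus

section WeightZero

/-- The eigenvalue of `euler p q` on `x^a` minus its eigenvalue on `x^b`, as a function of `a`. It
vanishes for all `p`, `q` only at `a = b` when the characteristic is `5`. -/
def relWeight (p q : F) (b : Idx) : A F := monomialWeight p q - monomialWeight p q b • 1

theorem mul_X (f : A F) (b : Idx) : f * X b = f b • X b := by
  funext a
  by_cases h : a = b <;> simp [X, h]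

theorem relWeight_mul_X (p q : F) (b : Idx) : relWeight p q b * X b = 0 := by
  simp [mul_X, relWeight]

variable [CharP F 5]

theorem torusWeight_eq_relWeight (p q : F) :
    torusWeight p q =
      (relWeight p q (2, 2), (relWeight p q (1, 0), relWeight p q (0, 1)),
        (relWeight p q (4, 3), relWeight p q (3, 4))) := by
  have five_eq_zero : (5 : F) = 0 := CharP.ofNat_eq_zero F 5
  have h₂₂ : monomialWeight p q (2, 2) = 2 * (p + q) := by
    change p * (2 : ℕ) + q * (2 : ℕ) = _
    push_cast
    ring
  have h₁₀ : monomialWeight p q (1, 0) = p := by simp [monomialWeight]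
  have h₀₁ : monomialWeight p q (0, 1) = q := by simp [monomialWeight]
  have h₄₃ : monomialWeight p q (4, 3) = p - 2 * (p + q) := by
    change p * (4 : ℕ) + q * (3 : ℕ) = _
    push_cast
    linear_combination (p + q) * five_eq_zero
  have h₃₄ : monomialWeight p q (3, 4) = q - 2 * (p + q) := by
    change p * (3 : ℕ) + q * (4 : ℕ) = _
    push_cast
    linear_combination (p + q) * five_eq_zero
  simp only [torusWeight, relWeight, h₂₂, h₁₀, h₀₁, h₄₃, h₃₄, sub_smul _ (2 * (p + q)), sub_add]

theorem eq_of_relWeight_eq_zero {a b : Idx} (h₁ : relWeight (1 : F) 0 b a = 0)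
    (h₂ : relWeight (0 : F) 1 b a = 0) : a = b := by
  have cast_inj {i j : Fin 5} (h : (i.val : F) = j.val) : i = j :=
    Fin.ext (CharP.natCast_injOn_Iio F 5 i.isLt j.isLt h)
  simp only [relWeight, monomialWeight, Pi.sub_apply, Pi.smul_apply, Pi.one_apply, one_mul,
    zero_mul, add_zero, zero_add, smul_eq_mul, mul_one, sub_eq_zero] at h₁ h₂
  exact Prod.ext (cast_inj h₁) (cast_inj h₂)

theorem mem_span_X_iff {b : Idx} {f : A F} :
    f ∈ Submodule.span F {X b} ↔ relWeight 1 0 b * f = 0 ∧ relWeight 0 1 b * f = 0 := by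
  rw [Submodule.mem_span_singleton]
  refine ⟨?_, fun ⟨h₁, h₂⟩ => ⟨f b, funext fun a => ?_⟩⟩
  · rintro ⟨r, rfl⟩
    simp [relWeight_mul_X]
  · by_cases hab : a = b
    · simp [X, hab]
    · have hfa : f a = 0 := by
        by_contra hfa
        exact hab (eq_of_relWeight_eq_zero ((mul_eq_zero.1 (congrFun h₁ a)).resolve_right hfa)
          ((mul_eq_zero.1 (congrFun h₂ a)).resolve_right hfa))
      simp [X, hab, hfa]

end WeightZero

section CartanSubalgebra

/-- The element `r x₁²x₂² + s x₁⁴x₂³D̃₁ + t x₁³x₂⁴D̃₂`, the general element of the complement of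
`T_M` in `C_M`. -/
def nonToral (r s t : F) : Mel F :=
  ιA (r • X (2, 2)) + ιT (s • X (4, 3), t • X (3, 4))

/-- The parametrization of `C_M` by the coordinates `(r, (p, q), (s, t))` of its elements
`r x₁²x₂² + (p x₁D₁ + q x₂D₂) + (s x₁⁴x₂³D̃₁ + t x₁³x₂⁴D̃₂)`. -/
def cartanMap (F : Type*) [Field F] : F × (F × F) × (F × F) →ₗ[F] Mel F :=
  let monomialLine (b : Idx) := LinearMap.toSpanSingleton F (A F) (X b)
  (monomialLine (2, 2)).prodMap
    (((monomialLine (1, 0)).prodMap (monomialLine (0, 1))).prodMap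
      ((monomialLine (4, 3)).prodMap (monomialLine (3, 4))))

theorem cartanMap_apply (r p q s t : F) :
    cartanMap F (r, (p, q), (s, t)) = ιW (euler p q) + nonToral r s t := by
  simp [cartanMap, ιW, euler, nonToral, ιA, ιT]

theorem cartanMap_injective : Function.Injective (cartanMap F) := by
  have line_injective (b : Idx) : Function.Injective (LinearMap.toSpanSingleton F (A F) (X b)) :=
    LinearMap.ker_eq_bot.1 (LinearMap.ker_toSpanSingleton F (X_ne_zero b))
  exact (line_injective _).prodMap
    (((line_injective _).prodMap (line_injective _)).prodMap
      ((line_injective _).prodMap (line_injective _)))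

theorem range_cartanMap : LinearMap.range (cartanMap F) = CM F := by
  ext m
  simp only [CM, Submodule.mem_span_insert, Submodule.mem_span_singleton, LinearMap.mem_range]
  constructor
  · rintro ⟨⟨r, ⟨p, q⟩, s, t⟩, rfl⟩
    exact ⟨p, _, ⟨q, _, ⟨r, _, ⟨s, _, ⟨t, rfl⟩, rfl⟩, rfl⟩, rfl⟩, by
      simp [cartanMap_apply, nonToral, euler, x1D1, x2D2, ιA, ιW, ιT]⟩
  · rintro ⟨p, _, ⟨q, _, ⟨r, _, ⟨s, _, ⟨t, rfl⟩, rfl⟩, rfl⟩, rfl⟩, rfl⟩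
    exact ⟨(r, (p, q), (s, t)), by
      simp [cartanMap_apply, nonToral, euler, x1D1, x2D2, ιA, ιW, ιT]⟩

theorem finrank_CM : Module.finrank F (CM F) = 5 := by
  rw [← range_cartanMap, LinearMap.finrank_range_of_inj cartanMap_injective]
  simp

theorem CM_eq_prod :
    CM F = (Submodule.span F {X (2, 2)}).prod
      (((Submodule.span F {X (1, 0)}).prod (Submodule.span F {X (0, 1)})).prod
        ((Submodule.span F {X (4, 3)}).prod (Submodule.span F {X (3, 4)}))) := by
  simp only [← range_cartanMap, cartanMap, LinearMap.range_prodMap,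
    LinearMap.range_toSpanSingleton]

theorem mem_CM_iff_torusWeight_mul_eq_zero [CharP F 5] {m : Mel F} :
    m ∈ CM F ↔ torusWeight 1 0 * m = 0 ∧ torusWeight 0 1 * m = 0 := by
  simp only [CM_eq_prod, Submodule.mem_prod, mem_span_X_iff, torusWeight_eq_relWeight,
    Prod.ext_iff, Prod.fst_mul, Prod.snd_mul, Prod.fst_zero, Prod.snd_zero]
  tauto

theorem mem_CM_iff_brM_eq_zero [CharP F 5] {m : Mel F} :
    m ∈ CM F ↔ brM x1D1 m = 0 ∧ brM x2D2 m = 0 := by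
  rw [mem_CM_iff_torusWeight_mul_eq_zero, ← ιW_euler_one_zero, ← ιW_euler_zero_one, brM_ιW_euler,
    brM_ιW_euler]

theorem ιW_euler_mem_CM (p q : F) : ιW (euler p q) ∈ CM F := by
  rw [← range_cartanMap]
  exact ⟨(0, (p, q), (0, 0)), by simp [cartanMap_apply, nonToral, ιA, ιT]⟩

theorem brM_ιW_euler_eq_zero [CharP F 5] (p q : F) {m : Mel F} (hm : m ∈ CM F) :
    brM (ιW (euler p q)) m = 0 := by
  obtain ⟨h₁, h₂⟩ := mem_CM_iff_torusWeight_mul_eq_zero.1 hm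
  rw [brM_ιW_euler, torusWeight_eq_smul_add_smul, add_mul, smul_mul_assoc, smul_mul_assoc, h₁, h₂,
    smul_zero, smul_zero, add_zero]

theorem brM_nonToral (r s t r' s' t' : F) :
    brM (nonToral r s t) (nonToral r' s' t') = 0 := by
  have mul_22_43 : mulA (X (2, 2)) (X (4, 3) : A F) = 0 := mulA_X_X_eq_zero (by decide)
  have mul_22_34 : mulA (X (2, 2)) (X (3, 4) : A F) = 0 := mulA_X_X_eq_zero (by decide)
  have mul_43_34 : mulA (X (4, 3)) (X (3, 4) : A F) = 0 := mulA_X_X_eq_zero (by decide)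
  have mul_34_43 : mulA (X (3, 4)) (X (4, 3) : A F) = 0 := mulA_X_X_eq_zero (by decide)
  simp [nonToral, brM_ιA_add_ιT, smulA, mulA_smul_left, mulA_smul_right, d1_smul, d2_smul,
    mul_22_43, mul_22_34, mul_43_34, mul_34_43, smul_comm r r']

theorem exists_eq_euler_add_nonToral_of_mem_CM {m : Mel F} (hm : m ∈ CM F) :
    ∃ p q r s t : F, m = ιW (euler p q) + nonToral r s t := by
  rw [← range_cartanMap] at hm
  obtain ⟨⟨r, ⟨p, q⟩, s, t⟩, rfl⟩ := hm
  exact ⟨p, q, r, s, t, cartanMap_apply r p q s t⟩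

theorem brM_eq_zero_of_mem_CM [CharP F 5] {u v : Mel F} (hu : u ∈ CM F) (hv : v ∈ CM F) :
    brM u v = 0 := by
  obtain ⟨p, q, r, s, t, rfl⟩ := exists_eq_euler_add_nonToral_of_mem_CM hu
  obtain ⟨p', q', r', s', t', rfl⟩ := exists_eq_euler_add_nonToral_of_mem_CM hv
  have nonToral_mem : nonToral r s t ∈ CM F := by
    simpa using sub_mem hu (ιW_euler_mem_CM p q)
  calc brM (ιW (euler p q) + nonToral r s t) (ιW (euler p' q') + nonToral r' s' t')
      = brM (nonToral r s t) (ιW (euler p' q') + nonToral r' s' t') := by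
        rw [brM_add_left, brM_ιW_euler_eq_zero p q hv, zero_add]
    _ = -(brM (ιW (euler p' q')) (nonToral r s t)
          + brM (nonToral r' s' t') (nonToral r s t)) := by
        rw [brM_swap, brM_add_left]
    _ = 0 := by
        rw [brM_ιW_euler_eq_zero p' q' nonToral_mem, brM_nonToral, add_zero, neg_zero]

theorem mem_CM_of_brM_mem_CM [CharP F 5] {m : Mel F} (h₁ : brM x1D1 m ∈ CM F)
    (h₂ : brM x2D2 m ∈ CM F) : m ∈ CM F := by
  replace h₁ := (mem_CM_iff_brM_eq_zero.1 h₁).1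
  replace h₂ := (mem_CM_iff_brM_eq_zero.1 h₂).2
  rw [← ιW_euler_one_zero, brM_ιW_euler, brM_ιW_euler] at h₁
  rw [← ιW_euler_zero_one, brM_ιW_euler, brM_ιW_euler] at h₂
  exact mem_CM_iff_torusWeight_mul_eq_zero.2
    ⟨mul_eq_zero_of_mul_mul_eq_zero h₁, mul_eq_zero_of_mul_mul_eq_zero h₂⟩

end CartanSubalgebra

/-- The centralizer of the torus `T_M = ⟨x₁D₁, x₂D₂⟩` inside the Melikian algebra equals
`C_M = T_M ⊕ F·(x₁²x₂²) ⊕ F·(x₁⁴x₂³D̃₁) ⊕ F·(x₁³x₂⁴D̃₂)`; in particular it has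
dimension `5` and is a Cartan subalgebra of `M` (a nilpotent, self-normalizing
subalgebra). -/
theorem melikian_cartan (F : Type*) [Field F] [CharP F 5] :
    {m : Mel F | brM x1D1 m = 0 ∧ brM x2D2 m = 0} = (CM F : Set (Mel F)) ∧
    Module.finrank F (CM F) = 5 ∧
    (∀ x ∈ CM F, ∀ y ∈ CM F, brM x y ∈ CM F) ∧
    (∃ n : ℕ, ∀ x ∈ CM F, ∀ y ∈ CM F, (brM x)^[n] y = 0) ∧
    (∀ m : Mel F, (∀ c ∈ CM F, brM c m ∈ CM F) → m ∈ CM F) := by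
  have abelian : ∀ x ∈ CM F, ∀ y ∈ CM F, brM x y = 0 := fun x hx y hy =>
    brM_eq_zero_of_mem_CM hx hy
  refine ⟨Set.ext fun m => mem_CM_iff_brM_eq_zero.symm, finrank_CM, fun x hx y hy => ?_,
    ⟨1, abelian⟩, fun m hm => ?_⟩
  · rw [abelian x hx y hy]
    exact zero_mem _
  · exact mem_CM_of_brM_mem_CM (hm x1D1 (Submodule.subset_span (by simp)))
      (hm x2D2 (Submodule.subset_span (by simp)))

end Melikian
end

section
/- The first cohomology of the Melikian algebra with values in the adjoint representation vanishes: H¹(M, M) = 0; equivalently, every derivation of M is inner. -/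
open scoped BigOperators

namespace Melikian

variable {F : Type*} [Field F]

/-!
The Euler element `E = x₁D₁ + x₂D₂` is toral: `(ad E)⁵ = ad E`. Subtracting an inner derivation from
a derivation `D` makes `D E` commute with `E`; then applying `D` to `(ad E)⁵ = ad E` shows that
`D E` is central, hence zero, and `D` preserves the weights of `ad E`. The pair `(D D₁, D D₂)`
satisfies the compatibility condition of the Poincaré lemma, which holds here because the Euler
operator acts by a non-zero scalar on the primitives; so a further inner derivation kills `D D₁` and
`D D₂`. The elements commuting with `D₁` and `D₂` are spanned by `1`, `D_i` and `D̃_i`, of weights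
`1`, `4` and `3`, so `D` maps `1`, `x₁²D₁` and `x₂²D₂`, all of weight `1`, to multiples of `1`.
These multiples vanish because `[1, [1, x₁]] = 2D₂` and because `x₂D₂` commutes with `x₁²D₁` but not
with `1` (and symmetrically for `x₂²D₂`). Finally, these three elements generate `M`.
-/

theorem pow_eq_zero_of_natCast_eq_zero {R A : Type*} [AddMonoidWithOne R] [MonoidWithZero A] {p : ℕ}
    [CharP R p] {x : A} (hx : x ^ p = 0) {n : ℕ} (hn : n ≠ 0) (h : (n : R) = 0) : x ^ n = 0 :=
  pow_eq_zero_of_le (Nat.le_of_dvd (Nat.pos_of_ne_zero hn) ((CharP.cast_eq_zero_iff R p n).1 h)) hx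

section LieDerivations

variable {K L : Type*} [CommRing K] [LieRing L] [LieAlgebra K L]

open LieAlgebra (ad)

theorem lie_lieDerivation_apply {D : LieDerivation K L L} {z : L} (hz : D z = 0) (x : L) :
    ⁅z, D x⁆ = D ⁅z, x⁆ := by
  rw [LieDerivation.apply_lie_eq_add, hz, zero_lie, add_zero]

theorem lieDerivation_ad_pow_succ_apply {t : L} {D : LieDerivation K L L} (hD : ⁅t, D t⁆ = 0)
    (n : ℕ) (x : L) :
    D ((ad K L t ^ (n + 1)) x) =
      (ad K L t ^ (n + 1)) (D x) + (n + 1) • (ad K L t ^ n) ⁅D t, x⁆ := by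
  have comm : Commute (ad K L t) (ad K L (D t)) := by
    ext y
    simp only [Module.End.mul_apply, LieAlgebra.ad_apply]
    rw [leibniz_lie, hD, zero_lie, zero_add]
  induction n generalizing x with
  | zero => simp [LieDerivation.apply_lie_eq_add, -LieDerivation.apply_lie_eq_sub]
  | succ n ih =>
    have ad_pow_succ (k : ℕ) (y : L) : (ad K L t ^ (k + 1)) y = ⁅t, (ad K L t ^ k) y⁆ := by
      rw [pow_succ', Module.End.mul_apply, LieAlgebra.ad_apply]
    have lie_ad_pow : ⁅D t, (ad K L t ^ (n + 1)) x⁆ = (ad K L t ^ (n + 1)) ⁅D t, x⁆ :=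
      (DFunLike.congr_fun (comm.pow_left (n + 1)).eq x).symm
    rw [ad_pow_succ (n + 1), LieDerivation.apply_lie_eq_add, ih, lie_ad_pow, lie_add, lie_nsmul,
      ← ad_pow_succ, ← ad_pow_succ, add_assoc, ← succ_nsmul]

theorem lieDerivation_apply_mem_center_of_ad_pow_eq (p : ℕ) [Fact p.Prime] [CharP K p] {t : L}
    (ht : ad K L t ^ p = ad K L t) {D : LieDerivation K L L} (hD : ⁅t, D t⁆ = 0) :
    D t ∈ LieAlgebra.center K L := by
  obtain ⟨n, rfl⟩ := Nat.exists_eq_succ_of_ne_zero (Fact.out : p.Prime).ne_zero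
  rw [LieModule.mem_maxTrivSubmodule]
  intro x
  have h := lieDerivation_ad_pow_succ_apply hD n x
  rw [ht, ← Nat.cast_smul_eq_nsmul K, CharP.cast_eq_zero, zero_smul, add_zero, LieAlgebra.ad_apply,
    LieAlgebra.ad_apply, LieDerivation.apply_lie_eq_add, add_eq_left] at h
  rw [← lie_skew, h, neg_zero]

theorem exists_sub_ad_apply_mem_center (p : ℕ) [Fact p.Prime] [CharP K p] {t : L}
    (ht : ad K L t ^ p = ad K L t) (D : LieDerivation K L L) :
    ∃ m : L, (D - LieDerivation.ad K L m) t ∈ LieAlgebra.center K L := by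
  obtain ⟨n, rfl⟩ := Nat.exists_eq_add_of_le' (Fact.out : p.Prime).two_le
  refine ⟨-(ad K L t ^ n) (D t), lieDerivation_apply_mem_center_of_ad_pow_eq _ ht ?_⟩
  have h := DFunLike.congr_fun ht (D t)
  rw [pow_succ', pow_succ'] at h
  simp only [Module.End.mul_apply, LieAlgebra.ad_apply] at h
  rw [LieDerivation.sub_apply, LieDerivation.ad_apply_apply, neg_lie, sub_neg_eq_add, lie_add,
    ← lie_skew _ t, lie_neg, h, add_neg_cancel]

end LieDerivations

section TruncatedPolynomials

open MvPolynomial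

/-- The exponent `(b₁, b₂)` as an exponent of polynomials in two variables. -/
noncomputable def exponent (b : Idx) : Fin 2 →₀ ℕ :=
  Finsupp.single 0 b.1.val + Finsupp.single 1 b.2.val

@[simp] theorem exponent_zero (b : Idx) : exponent b 0 = b.1.val := by simp [exponent]

@[simp] theorem exponent_one (b : Idx) : exponent b 1 = b.2.val := by simp [exponent]

theorem exponent_injective : Function.Injective exponent := fun b c h =>
  Prod.ext (Fin.ext <| by simpa using DFunLike.congr_fun h 0)
    (Fin.ext <| by simpa using DFunLike.congr_fun h 1)

/-- The reduction `F[x₁,x₂] → F[x₁,x₂]/(x₁⁵,x₂⁵)`, from which the ring axioms of the quotient and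
the Leibniz rules are inherited. -/
noncomputable def trunc : MvPolynomial (Fin 2) F →ₗ[F] A F :=
  LinearMap.pi fun b => lcoeff F (exponent b)

theorem trunc_apply (f : MvPolynomial (Fin 2) F) (b : Idx) : trunc f b = coeff (exponent b) f :=
  rfl

theorem trunc_monomial (b : Idx) (c : F) : trunc (monomial (exponent b) c) = c • X b := by
  funext a
  simp [trunc_apply, coeff_monomial, X, exponent_injective.eq_iff, eq_comm]

theorem trunc_surjective : Function.Surjective (trunc : MvPolynomial (Fin 2) F → A F) := fun f =>
  ⟨∑ b, monomial (exponent b) (f b), by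
    funext a
    simp [trunc_monomial, X]⟩

theorem trunc_mul (f g : MvPolynomial (Fin 2) F) : trunc (f * g) = mulA (trunc f) (trunc g) := by
  funext a
  have mulA_eq : mulA (trunc f) (trunc g) a =
      ∑ p : Idx × Idx with p.1.1.val + p.2.1.val = a.1.val ∧ p.1.2.val + p.2.2.val = a.2.val,
        trunc f p.1 * trunc g p.2 := by
    rw [Finset.sum_filter, Fintype.sum_prod_type]
    rfl
  rw [trunc_apply, coeff_mul, mulA_eq]
  symm
  refine Finset.sum_nbij (fun p => (exponent p.1, exponent p.2)) ?_ ?_ ?_ fun _ _ => rfl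
  · intro p hp
    simpa [Finsupp.ext_iff] using hp
  · exact (exponent_injective.prodMap exponent_injective).injOn
  · rintro ⟨u, v⟩ huv
    have h : ∀ i, u i + v i = exponent a i := by
      simpa [Finsupp.ext_iff] using huv
    have h0 := h 0
    have h1 := h 1
    simp only [exponent_zero, exponent_one] at h0 h1
    refine ⟨((⟨u 0, by omega⟩, ⟨u 1, by omega⟩), (⟨v 0, by omega⟩, ⟨v 1, by omega⟩)),
      by simp [*], ?_⟩
    ext i <;> fin_cases i <;> simp

variable [CharP F 5]

theorem d1_trunc (f : MvPolynomial (Fin 2) F) : d1 (trunc f) = trunc (pderiv 0 f) := by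
  funext a
  rw [trunc_apply, coeff_pderiv, exponent_zero, d1]
  split_ifs with h
  · have : exponent (⟨a.1.val + 1, h⟩, a.2) = exponent a + Finsupp.single 0 1 := by
      ext i; fin_cases i <;> simp
    rw [trunc_apply, this]
    push_cast
    ring
  · have : ((a.1.val : F) + 1) = 0 := by
      rw [show a.1.val = 4 by omega]
      exact_mod_cast CharP.cast_eq_zero F 5
    rw [this, mul_zero]

theorem d2_trunc (f : MvPolynomial (Fin 2) F) : d2 (trunc f) = trunc (pderiv 1 f) := by
  funext a
  rw [trunc_apply, coeff_pderiv, exponent_one, d2]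
  split_ifs with h
  · have : exponent (a.1, ⟨a.2.val + 1, h⟩) = exponent a + Finsupp.single 1 1 := by
      ext i; fin_cases i <;> simp
    rw [trunc_apply, this]
    push_cast
    ring
  · have : ((a.2.val : F) + 1) = 0 := by
      rw [show a.2.val = 4 by omega]
      exact_mod_cast CharP.cast_eq_zero F 5
    rw [this, mul_zero]

end TruncatedPolynomials

/-- The algebra `A(2) = F[x₁,x₂]/(x₁⁵,x₂⁵)`: a synonym of `A F` carrying the truncated product in
place of the pointwise one. -/
def TruncPoly (F : Type*) [Field F] : Type _ := A F

namespace TruncPoly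

open MvPolynomial

instance : AddCommGroup (TruncPoly F) := inferInstanceAs (AddCommGroup (A F))

instance : Module F (TruncPoly F) := inferInstanceAs (Module F (A F))

instance : Mul (TruncPoly F) := ⟨fun f g => mulA f g⟩

instance : One (TruncPoly F) := ⟨(X (0, 0) : A F)⟩

/-- The linear map `trunc` with values in `TruncPoly F`. -/
noncomputable def mkₗ : MvPolynomial (Fin 2) F →ₗ[F] TruncPoly F := trunc

theorem mkₗ_surjective : Function.Surjective (mkₗ : MvPolynomial (Fin 2) F → TruncPoly F) :=
  trunc_surjective

theorem mkₗ_mul (f g : MvPolynomial (Fin 2) F) : mkₗ (f * g) = mkₗ f * mkₗ g := trunc_mul f g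

theorem mkₗ_one : (mkₗ 1 : TruncPoly F) = 1 := by
  have : exponent (0, 0) = 0 := by ext i; fin_cases i <;> simp
  have h := trunc_monomial (F := F) (0, 0) 1
  rw [this, one_smul] at h
  exact h

noncomputable instance : CommRing (TruncPoly F) where
  __ := (inferInstance : AddCommGroup (TruncPoly F))
  left_distrib := by simp only [mkₗ_surjective.forall, ← mkₗ_mul, ← map_add, mul_add, implies_true]
  right_distrib := by simp only [mkₗ_surjective.forall, ← mkₗ_mul, ← map_add, add_mul, implies_true]
  zero_mul := mkₗ_surjective.forall.2 fun f => by
    rw [← map_zero (mkₗ (F := F)), ← mkₗ_mul, zero_mul]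
  mul_zero := mkₗ_surjective.forall.2 fun f => by
    rw [← map_zero (mkₗ (F := F)), ← mkₗ_mul, mul_zero]
  mul_assoc := by simp only [mkₗ_surjective.forall, ← mkₗ_mul, mul_assoc, implies_true]
  one_mul := by simp only [mkₗ_surjective.forall, ← mkₗ_mul, ← mkₗ_one, one_mul, implies_true]
  mul_one := by simp only [mkₗ_surjective.forall, ← mkₗ_mul, ← mkₗ_one, mul_one, implies_true]
  mul_comm := by simp only [mkₗ_surjective.forall, ← mkₗ_mul, mul_comm, implies_true]

noncomputable instance : Algebra F (TruncPoly F) :=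
  Algebra.ofModule
    (by simp only [mkₗ_surjective.forall, ← mkₗ_mul, ← map_smul, smul_mul_assoc, implies_true])
    (by simp only [mkₗ_surjective.forall, ← mkₗ_mul, ← map_smul, mul_smul_comm, implies_true])

/-- The quotient map `F[x₁,x₂] → F[x₁,x₂]/(x₁⁵,x₂⁵)`. -/
noncomputable def mk : MvPolynomial (Fin 2) F →ₐ[F] TruncPoly F :=
  AlgHom.ofLinearMap mkₗ mkₗ_one mkₗ_mul

theorem mk_surjective : Function.Surjective (mk : MvPolynomial (Fin 2) F → TruncPoly F) :=
  trunc_surjective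

variable (F) in
/-- The coordinate `x₁`. -/
noncomputable def x₁ : TruncPoly F := mk (.X 0)

variable (F) in
/-- The coordinate `x₂`. -/
noncomputable def x₂ : TruncPoly F := mk (.X 1)

theorem mk_X_pow_five (i : Fin 2) : (mk (.X i) : TruncPoly F) ^ 5 = 0 := by
  rw [← map_pow, X_pow_eq_monomial]
  funext b
  have : (if Finsupp.single i 5 = exponent b then (1 : F) else 0) = 0 := by
    rw [if_neg]
    intro h
    have := DFunLike.congr_fun h i
    fin_cases i <;> simp at this <;> omega
  exact (coeff_monomial _ _ _).trans this

theorem x₁_pow_five : x₁ F ^ 5 = 0 := mk_X_pow_five 0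

theorem x₂_pow_five : x₂ F ^ 5 = 0 := mk_X_pow_five 1

theorem mem_of_monomials_mem (S : Submodule F (TruncPoly F))
    (hS : ∀ i j : ℕ, x₁ F ^ i * x₂ F ^ j ∈ S) (f : TruncPoly F) : f ∈ S := by
  obtain ⟨f, rfl⟩ := mk_surjective f
  induction f using MvPolynomial.induction_on' with
  | monomial u a =>
    rw [monomial_eq, Finsupp.prod_fintype _ _ fun _ => pow_zero _, Fin.prod_univ_two,
      ← smul_eq_C_mul, map_smul, map_mul, map_pow, map_pow]
    exact S.smul_mem a (hS _ _)
  | add f g hf hg => rw [map_add]; exact S.add_mem hf hg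

instance : Nontrivial (TruncPoly F) := inferInstanceAs (Nontrivial (A F))

/-- The derivation of `TruncPoly F` induced by a derivation `δ` of the polynomial ring. -/
noncomputable def inducedDerivation (d : A F → A F)
    (δ : Derivation F (MvPolynomial (Fin 2) F) (MvPolynomial (Fin 2) F))
    (hd : ∀ f, d (trunc f) = trunc (δ f)) : Derivation F (TruncPoly F) (TruncPoly F) :=
  let d' : TruncPoly F → TruncPoly F := d
  have hd' : ∀ f, d' (mk f) = mk (δ f) := hd
  Derivation.mk'
    { toFun := d'
      map_add' := by simp only [mk_surjective.forall, ← map_add, hd', implies_true]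
      map_smul' := fun c => mk_surjective.forall.2 fun f => by
        rw [← map_smul, hd', δ.map_smul, map_smul, hd', RingHom.id_apply] }
    (by simp [mk_surjective.forall, ← map_mul, hd'])

variable [CharP F 5]

instance : CharP (TruncPoly F) 5 :=
  charP_of_injective_algebraMap (FaithfulSMul.algebraMap_injective F _) 5

/-- The derivation `∂/∂x₁`. -/
noncomputable def pd₁ : Derivation F (TruncPoly F) (TruncPoly F) :=
  inducedDerivation d1 (pderiv 0) d1_trunc

/-- The derivation `∂/∂x₂`. -/
noncomputable def pd₂ : Derivation F (TruncPoly F) (TruncPoly F) :=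
  inducedDerivation d2 (pderiv 1) d2_trunc

theorem pd₁_mk (f : MvPolynomial (Fin 2) F) : pd₁ (mk f) = mk (pderiv 0 f) := d1_trunc f

theorem pd₂_mk (f : MvPolynomial (Fin 2) F) : pd₂ (mk f) = mk (pderiv 1 f) := d2_trunc f

theorem pd₁_pd₂_comm (f : TruncPoly F) : pd₁ (pd₂ f) = pd₂ (pd₁ f) := by
  obtain ⟨f, rfl⟩ := mk_surjective f
  have pderiv_comm : pderiv 0 (pderiv 1 f) = pderiv 1 (pderiv 0 f) := by
    ext m
    simp only [coeff_pderiv, add_right_comm m, Finsupp.add_apply, ne_eq, one_ne_zero, zero_ne_one,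
      not_false_eq_true, Finsupp.single_eq_of_ne, add_zero]
    ring
  simp only [pd₁_mk, pd₂_mk, pderiv_comm]

@[simp] theorem pd₁_x₁ : pd₁ (x₁ F) = 1 := by simp [x₁, pd₁_mk]

@[simp] theorem pd₁_x₂ : pd₁ (x₂ F) = 0 := by simp [x₂, pd₁_mk]

@[simp] theorem pd₂_x₁ : pd₂ (x₁ F) = 0 := by simp [x₁, pd₂_mk]

@[simp] theorem pd₂_x₂ : pd₂ (x₂ F) = 1 := by simp [x₂, pd₂_mk]

theorem eq_smul_one_of_pd_eq_zero {f : TruncPoly F} (h₁ : pd₁ f = 0) (h₂ : pd₂ f = 0) :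
    ∃ c : F, f = c • 1 := by
  have cast_ne (n : ℕ) (hn : n + 1 < 5) : ((n : F) + 1) ≠ 0 := fun h =>
    Nat.not_dvd_of_pos_of_lt n.succ_pos hn ((CharP.cast_eq_zero_iff F 5 _).1 (by exact_mod_cast h))
  let g : A F := f
  have coeff_eq_zero : ∀ b : Idx, b ≠ (0, 0) → g b = 0 := by
    rintro ⟨⟨_ | i, hi⟩, ⟨j, hj⟩⟩ hb
    · obtain ⟨j, rfl⟩ : ∃ k, j = k + 1 :=
        Nat.exists_eq_succ_of_ne_zero (by rintro rfl; exact hb rfl)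
      have := congr_fun (show d2 g = 0 from h₂) (0, ⟨j, by omega⟩)
      simpa [d2, hj, cast_ne j hj] using this
    · have := congr_fun (show d1 g = 0 from h₁) (⟨i, by omega⟩, ⟨j, hj⟩)
      simpa [d1, hi, cast_ne i hi] using this
  refine ⟨g (0, 0), funext fun b => show g b = g (0, 0) * Melikian.X (0, 0) b from ?_⟩
  by_cases hb : b = (0, 0)
  · simp [hb, Melikian.X]
  · simp [hb, Melikian.X, coeff_eq_zero]

theorem pd₁_x₂_pow (n : ℕ) : pd₁ (x₂ F ^ n) = 0 := by simp [Derivation.leibniz_pow]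

theorem pd₂_x₁_pow (n : ℕ) : pd₂ (x₁ F ^ n) = 0 := by simp [Derivation.leibniz_pow]

theorem x₁_mul_pd₁_x₁_pow (n : ℕ) : x₁ F * pd₁ (x₁ F ^ n) = n * x₁ F ^ n := by
  rw [Derivation.leibniz_pow, pd₁_x₁, smul_eq_mul, mul_one, nsmul_eq_mul, mul_left_comm]
  cases n with
  | zero => simp
  | succ n => rw [Nat.add_sub_cancel, ← pow_succ']

theorem x₂_mul_pd₂_x₂_pow (n : ℕ) : x₂ F * pd₂ (x₂ F ^ n) = n * x₂ F ^ n := by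
  rw [Derivation.leibniz_pow, pd₂_x₂, smul_eq_mul, mul_one, nsmul_eq_mul, mul_left_comm]
  cases n with
  | zero => simp
  | succ n => rw [Nat.add_sub_cancel, ← pow_succ']

/-- The operator `θ + k` on `A(2)`, where `θ = x₁∂₁ + x₂∂₂` is the Euler operator. -/
noncomputable def shiftedEuler (k : ℕ) : Module.End F (TruncPoly F) :=
  (x₁ F • pd₁ + x₂ F • pd₂ : Derivation F (TruncPoly F) (TruncPoly F)).toLinearMap + (k : F) • 1

theorem shiftedEuler_apply (k : ℕ) (f : TruncPoly F) :
    shiftedEuler k f = x₁ F * pd₁ f + x₂ F * pd₂ f + (k : F) • f := rfl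

theorem shiftedEuler_monomial (k i j : ℕ) :
    shiftedEuler k (x₁ F ^ i * x₂ F ^ j) = ((i + j + k : ℕ) : F) • (x₁ F ^ i * x₂ F ^ j) := by
  simp only [shiftedEuler_apply, Derivation.leibniz, smul_eq_mul, pd₁_x₂_pow, pd₂_x₁_pow, mul_zero,
    zero_add, add_zero, Nat.cast_smul_eq_nsmul, nsmul_eq_mul]
  push_cast
  linear_combination x₂ F ^ j * x₁_mul_pd₁_x₁_pow (F := F) i +
    x₁ F ^ i * x₂_mul_pd₂_x₂_pow (F := F) j

theorem shiftedEuler_pow_five (k : ℕ) :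
    (shiftedEuler k : Module.End F (TruncPoly F)) ^ 5 = shiftedEuler k := by
  have : Fact (Nat.Prime 5) := ⟨Nat.prime_five⟩
  have natCast_pow (n : ℕ) : (n : F) ^ 5 = n := map_natCast (frobenius F 5) n
  refine LinearMap.ext (mem_of_monomials_mem (LinearMap.eqLocus _ _) fun i j => ?_)
  calc (shiftedEuler k ^ 5) (x₁ F ^ i * x₂ F ^ j)
    _ = ((i + j + k : ℕ) : F) ^ 5 • (x₁ F ^ i * x₂ F ^ j) := by
      simp only [pow_succ, pow_zero, one_mul, Module.End.mul_apply, shiftedEuler_monomial, map_smul,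
        smul_smul, mul_assoc]
    _ = shiftedEuler k (x₁ F ^ i * x₂ F ^ j) := by rw [natCast_pow, shiftedEuler_monomial]

theorem exists_primitive {k : ℕ} (hk : (k : F) ≠ 0) {u v : TruncPoly F} (hu : shiftedEuler k u = -u)
    (hv : shiftedEuler k v = -v) (huv : pd₁ v = pd₂ u) :
    ∃ w, pd₁ w = u ∧ pd₂ w = v ∧ shiftedEuler k w = 0 := by
  set z := x₁ F * u + x₂ F * v with hz
  have pd₁_z : pd₁ z = -(k : F) • u := by
    rw [shiftedEuler_apply] at hu
    simp only [hz, map_add, Derivation.leibniz, pd₁_x₁, pd₁_x₂, smul_eq_mul, huv, neg_smul]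
    linear_combination hu
  have pd₂_z : pd₂ z = -(k : F) • v := by
    rw [shiftedEuler_apply] at hv
    simp only [hz, map_add, Derivation.leibniz, pd₂_x₁, pd₂_x₂, smul_eq_mul, ← huv, neg_smul]
    linear_combination hv
  have euler_z : shiftedEuler k z = 0 := by
    rw [shiftedEuler_apply, pd₁_z, pd₂_z, hz, mul_smul_comm, mul_smul_comm]
    module
  refine ⟨-(k : F)⁻¹ • z, ?_, ?_, ?_⟩
  · rw [Derivation.map_smul, pd₁_z, smul_smul, neg_mul_neg, inv_mul_cancel₀ hk, one_smul]
  · rw [Derivation.map_smul, pd₂_z, smul_smul, neg_mul_neg, inv_mul_cancel₀ hk, one_smul]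
  · rw [map_smul, euler_z, smul_zero]

theorem eq_zero_of_shiftedEuler_eq_smul {k : ℕ} {c : F} (hc : c ≠ k) {f : TruncPoly F}
    (h₁ : pd₁ f = 0) (h₂ : pd₂ f = 0) (h : shiftedEuler k f = c • f) : f = 0 := by
  rw [shiftedEuler_apply, h₁, h₂, mul_zero, mul_zero, zero_add, zero_add, eq_comm, ← sub_eq_zero,
    ← sub_smul] at h
  exact (smul_eq_zero.1 h).resolve_left (sub_ne_zero.2 hc)

end TruncPoly

open TruncPoly

/-- The Melikian algebra with its Lie algebra structure: a synonym of `Mel F` in which the space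
`A(2)` carries its ring structure. -/
def MelLie (F : Type*) [Field F] : Type _ :=
  TruncPoly F × (TruncPoly F × TruncPoly F) × (TruncPoly F × TruncPoly F)

namespace MelLie

instance : AddCommGroup (MelLie F) :=
  inferInstanceAs
    (AddCommGroup (TruncPoly F × (TruncPoly F × TruncPoly F) × (TruncPoly F × TruncPoly F)))

noncomputable instance : Module F (MelLie F) :=
  inferInstanceAs
    (Module F (TruncPoly F × (TruncPoly F × TruncPoly F) × (TruncPoly F × TruncPoly F)))

instance : Bracket (MelLie F) (MelLie F) := ⟨fun u v => brM u v⟩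

/-- The element `f + g₁D₁ + g₂D₂ + h₁D̃₁ + h₂D̃₂`. -/
def mk (f g₁ g₂ h₁ h₂ : TruncPoly F) : MelLie F := (f, (g₁, g₂), (h₁, h₂))

@[elab_as_elim, induction_eliminator]
theorem ind {P : MelLie F → Prop} (mk : ∀ f g₁ g₂ h₁ h₂, P (mk f g₁ g₂ h₁ h₂)) (u : MelLie F) :
    P u :=
  mk u.1 u.2.1.1 u.2.1.2 u.2.2.1 u.2.2.2

section

variable (f f' g₁ g₁' g₂ g₂' h₁ h₁' h₂ h₂' : TruncPoly F)

@[simp] theorem mk_inj :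
    mk f g₁ g₂ h₁ h₂ = mk f' g₁' g₂' h₁' h₂' ↔
      f = f' ∧ g₁ = g₁' ∧ g₂ = g₂' ∧ h₁ = h₁' ∧ h₂ = h₂' :=
  ⟨fun h => ⟨congrArg (·.1) h, congrArg (·.2.1.1) h, congrArg (·.2.1.2) h, congrArg (·.2.2.1) h,
    congrArg (·.2.2.2) h⟩, by rintro ⟨rfl, rfl, rfl, rfl, rfl⟩; rfl⟩

theorem zero_eq_mk : (0 : MelLie F) = mk 0 0 0 0 0 := rfl

@[simp] theorem mk_add_mk :
    mk f g₁ g₂ h₁ h₂ + mk f' g₁' g₂' h₁' h₂' =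
      mk (f + f') (g₁ + g₁') (g₂ + g₂') (h₁ + h₁') (h₂ + h₂') :=
  rfl

@[simp] theorem neg_mk : -mk f g₁ g₂ h₁ h₂ = mk (-f) (-g₁) (-g₂) (-h₁) (-h₂) := rfl

@[simp] theorem smul_mk (c : F) :
    c • mk f g₁ g₂ h₁ h₂ = mk (c • f) (c • g₁) (c • g₂) (c • h₁) (c • h₂) := rfl

theorem lie_mk [CharP F 5] :
    ⁅mk f g₁ g₂ h₁ h₂, mk f' g₁' g₂' h₁' h₂'⁆ =
      mk
        (g₁ * pd₁ f' + g₂ * pd₂ f' - 2 * ((pd₁ g₁ + pd₂ g₂) * f')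
          - (g₁' * pd₁ f + g₂' * pd₂ f - 2 * ((pd₁ g₁' + pd₂ g₂') * f))
          + (h₁ * h₂' - h₂ * h₁'))
        (g₁ * pd₁ g₁' + g₂ * pd₂ g₁' - (g₁' * pd₁ g₁ + g₂' * pd₂ g₁) + f * h₁' - f' * h₁)
        (g₁ * pd₁ g₂' + g₂ * pd₂ g₂' - (g₁' * pd₁ g₂ + g₂' * pd₂ g₂) + f * h₂' - f' * h₂)
        (g₁ * pd₁ h₁' + g₂ * pd₂ h₁' - (h₁' * pd₁ g₁ + h₂' * pd₂ g₁) + 2 * ((pd₁ g₁ + pd₂ g₂) * h₁')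
          - (g₁' * pd₁ h₁ + g₂' * pd₂ h₁ - (h₁ * pd₁ g₁' + h₂ * pd₂ g₁')
            + 2 * ((pd₁ g₁' + pd₂ g₂') * h₁))
          + 2 * (f' * pd₂ f - f * pd₂ f'))
        (g₁ * pd₁ h₂' + g₂ * pd₂ h₂' - (h₁' * pd₁ g₂ + h₂' * pd₂ g₂) + 2 * ((pd₁ g₁ + pd₂ g₂) * h₂')
          - (g₁' * pd₁ h₂ + g₂' * pd₂ h₂ - (h₁ * pd₁ g₂' + h₂ * pd₂ g₂')
            + 2 * ((pd₁ g₁' + pd₂ g₂') * h₂))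
          + 2 * (f * pd₁ f' - f' * pd₁ f)) := by
  change brM _ _ = _
  simp only [brM, two_smul, two_mul]
  rfl

end

variable (F) in
/-- The element `D₁`. -/
noncomputable def D₁ : MelLie F := mk 0 1 0 0 0

variable (F) in
/-- The element `D₂`. -/
noncomputable def D₂ : MelLie F := mk 0 0 1 0 0

variable (F) in
/-- The Euler element `x₁D₁ + x₂D₂`, a toral element whose weights grade `M` modulo 5. -/
noncomputable def E : MelLie F := mk 0 (x₁ F) (x₂ F) 0 0

variable (F) in
/-- The unit `1 ∈ A(2)`. -/
noncomputable def unit : MelLie F := mk 1 0 0 0 0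

variable [CharP F 5]

theorem leibniz (u v w : MelLie F) : ⁅u, ⁅v, w⁆⁆ = ⁅⁅u, v⁆, w⁆ + ⁅v, ⁅u, w⁆⁆ := by
  induction u with | mk f₁ a₁ b₁ c₁ d₁
  induction v with | mk f₂ a₂ b₂ c₂ d₂
  induction w with | mk f₃ a₃ b₃ c₃ d₃
  have pd₁_two : pd₁ (2 : TruncPoly F) = 0 := pd₁.map_natCast 2
  have pd₂_two : pd₂ (2 : TruncPoly F) = 0 := pd₂.map_natCast 2
  simp only [lie_mk, mk_add_mk, mk_inj, map_add, map_sub, Derivation.leibniz, smul_eq_mul,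
    pd₁_two, pd₂_two, pd₁_pd₂_comm]
  refine ⟨?_, ?_, ?_, ?_, ?_⟩
  · grind
  · ring
  · ring
  · grind
  · grind

noncomputable instance : LieRing (MelLie F) where
  add_lie u v w := by
    induction u
    induction v
    induction w
    simp only [lie_mk, mk_add_mk, mk_inj, map_add]
    refine ⟨?_, ?_, ?_, ?_, ?_⟩ <;> ring
  lie_add u v w := by
    induction u
    induction v
    induction w
    simp only [lie_mk, mk_add_mk, mk_inj, map_add]
    refine ⟨?_, ?_, ?_, ?_, ?_⟩ <;> ring
  lie_self u := by
    induction u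
    simp only [lie_mk, zero_eq_mk, mk_inj]
    refine ⟨?_, ?_, ?_, ?_, ?_⟩ <;> ring
  leibniz_lie := leibniz

noncomputable instance : LieAlgebra F (MelLie F) where
  lie_smul c u v := by
    induction u
    induction v
    simp only [lie_mk, smul_mk, mk_inj, Derivation.map_smul]
    simp only [Algebra.smul_def]
    refine ⟨?_, ?_, ?_, ?_, ?_⟩ <;> ring

section

variable (f g₁ g₂ h₁ h₂ : TruncPoly F)

theorem D₁_lie_mk : ⁅D₁ F, mk f g₁ g₂ h₁ h₂⁆ = mk (pd₁ f) (pd₁ g₁) (pd₁ g₂) (pd₁ h₁) (pd₁ h₂) := by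
  simp [D₁, lie_mk]

theorem D₂_lie_mk : ⁅D₂ F, mk f g₁ g₂ h₁ h₂⁆ = mk (pd₂ f) (pd₂ g₁) (pd₂ g₂) (pd₂ h₁) (pd₂ h₂) := by
  simp [D₂, lie_mk]

theorem E_lie_mk : ⁅E F, mk f g₁ g₂ h₁ h₂⁆ =
    mk (shiftedEuler 1 f) (shiftedEuler 4 g₁) (shiftedEuler 4 g₂) (shiftedEuler 3 h₁)
      (shiftedEuler 3 h₂) := by
  simp only [E, lie_mk, mk_inj, shiftedEuler_apply, Nat.cast_smul_eq_nsmul]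
  simp only [pd₁_x₁, pd₁_x₂, pd₂_x₁, pd₂_x₂, map_zero, nsmul_eq_mul, Nat.cast_ofNat, Nat.cast_one]
  grind

end

theorem E_lie_x₁_pow_D₁ (n : ℕ) :
    ⁅E F, mk 0 (x₁ F ^ n) 0 0 0⁆ = (n - 1 : F) • mk 0 (x₁ F ^ n) 0 0 0 := by
  have weight : ((n + 0 + 4 : ℕ) : F) = n - 1 := by push_cast; grind
  have h := shiftedEuler_monomial (F := F) 4 n 0
  rw [pow_zero, mul_one, weight] at h
  simp only [E_lie_mk, h, map_zero, smul_mk, smul_zero]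

theorem E_lie_x₂_pow_D₂ (n : ℕ) :
    ⁅E F, mk 0 0 (x₂ F ^ n) 0 0⁆ = (n - 1 : F) • mk 0 0 (x₂ F ^ n) 0 0 := by
  have weight : ((0 + n + 4 : ℕ) : F) = n - 1 := by push_cast; grind
  have h := shiftedEuler_monomial (F := F) 4 0 n
  rw [pow_zero, one_mul, weight] at h
  simp only [E_lie_mk, h, map_zero, smul_mk, smul_zero]

theorem E_lie_unit : ⁅E F, unit F⁆ = unit F := by
  simp [unit, E_lie_mk, shiftedEuler_apply]

theorem E_lie_D₁ : ⁅E F, D₁ F⁆ = -D₁ F := by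
  simpa [D₁] using E_lie_x₁_pow_D₁ (F := F) 0

theorem E_lie_D₂ : ⁅E F, D₂ F⁆ = -D₂ F := by
  simpa [D₂] using E_lie_x₂_pow_D₂ (F := F) 0

theorem D₁_lie_D₂ : ⁅D₁ F, D₂ F⁆ = 0 := by simp [D₂, D₁_lie_mk, zero_eq_mk]

theorem ad_E_pow_five :
    LieAlgebra.ad F (MelLie F) (E F) ^ 5 = LieAlgebra.ad F (MelLie F) (E F) := by
  ext u
  induction u with | mk f g₁ g₂ h₁ h₂
  have pow_five (k : ℕ) (f : TruncPoly F) := DFunLike.congr_fun (shiftedEuler_pow_five (F := F) k) f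
  simp only [pow_succ, pow_zero, one_mul, Module.End.mul_apply] at pow_five
  simp only [pow_succ, pow_zero, one_mul, Module.End.mul_apply, LieAlgebra.ad_apply, E_lie_mk,
    pow_five]

theorem exists_D₁_D₂_primitive {u v : MelLie F} (hu : ⁅E F, u⁆ = -u) (hv : ⁅E F, v⁆ = -v)
    (huv : ⁅D₁ F, v⁆ = ⁅D₂ F, u⁆) :
    ∃ w, ⁅D₁ F, w⁆ = u ∧ ⁅D₂ F, w⁆ = v ∧ ⁅E F, w⁆ = 0 := by
  induction u with | mk f g₁ g₂ h₁ h₂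
  induction v with | mk f' g₁' g₂' h₁' h₂'
  simp only [E_lie_mk, neg_mk, mk_inj, D₁_lie_mk, D₂_lie_mk] at hu hv huv
  obtain ⟨a, pd₁_a, pd₂_a, hEa⟩ := exists_primitive (by grind) hu.1 hv.1 huv.1
  obtain ⟨b₁, pd₁_b₁, pd₂_b₁, hEb₁⟩ := exists_primitive (by grind) hu.2.1 hv.2.1 huv.2.1
  obtain ⟨b₂, pd₁_b₂, pd₂_b₂, hEb₂⟩ := exists_primitive (by grind) hu.2.2.1 hv.2.2.1 huv.2.2.1
  obtain ⟨c₁, pd₁_c₁, pd₂_c₁, hEc₁⟩ :=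
    exists_primitive (by grind) hu.2.2.2.1 hv.2.2.2.1 huv.2.2.2.1
  obtain ⟨c₂, pd₁_c₂, pd₂_c₂, hEc₂⟩ :=
    exists_primitive (by grind) hu.2.2.2.2 hv.2.2.2.2 huv.2.2.2.2
  refine ⟨mk a b₁ b₂ c₁ c₂, ?_, ?_, ?_⟩
  · rw [D₁_lie_mk, pd₁_a, pd₁_b₁, pd₁_b₂, pd₁_c₁, pd₁_c₂]
  · rw [D₂_lie_mk, pd₂_a, pd₂_b₁, pd₂_b₂, pd₂_c₁, pd₂_c₂]
  · rw [E_lie_mk, hEa, hEb₁, hEb₂, hEc₁, hEc₂, zero_eq_mk]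

theorem exists_eq_smul_unit_of_lie_eq {u : MelLie F} (h₁ : ⁅D₁ F, u⁆ = 0) (h₂ : ⁅D₂ F, u⁆ = 0)
    {k : F} (hE : ⁅E F, u⁆ = k • u) (hk₃ : k ≠ 3) (hk₄ : k ≠ 4) : ∃ c : F, u = c • unit F := by
  induction u with | mk f g₁ g₂ t₁ t₂
  simp only [D₁_lie_mk, D₂_lie_mk, E_lie_mk, zero_eq_mk, smul_mk, mk_inj] at h₁ h₂ hE
  obtain ⟨c, hf⟩ := eq_smul_one_of_pd_eq_zero h₁.1 h₂.1
  refine ⟨c, ?_⟩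
  rw [unit, smul_mk, mk_inj]
  simp only [smul_zero]
  exact ⟨hf, eq_zero_of_shiftedEuler_eq_smul (by simpa) h₁.2.1 h₂.2.1 hE.2.1,
    eq_zero_of_shiftedEuler_eq_smul (by simpa) h₁.2.2.1 h₂.2.2.1 hE.2.2.1,
    eq_zero_of_shiftedEuler_eq_smul (by simpa) h₁.2.2.2.1 h₂.2.2.2.1 hE.2.2.2.1,
    eq_zero_of_shiftedEuler_eq_smul (by simpa) h₁.2.2.2.2 h₂.2.2.2.2 hE.2.2.2.2⟩

theorem eq_zero_of_lie_eq {u : MelLie F} (h₁ : ⁅D₁ F, u⁆ = 0) (h₂ : ⁅D₂ F, u⁆ = 0) {k : F}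
    (hE : ⁅E F, u⁆ = k • u) (hk₁ : k ≠ 1) (hk₃ : k ≠ 3) (hk₄ : k ≠ 4) : u = 0 := by
  obtain ⟨c, rfl⟩ := exists_eq_smul_unit_of_lie_eq h₁ h₂ hE hk₃ hk₄
  rw [lie_smul, E_lie_unit] at hE
  have h : (k - 1) • c • unit F = 0 := by rw [sub_smul, one_smul, ← hE, sub_self]
  exact (smul_eq_zero.1 h).resolve_left (sub_ne_zero.2 hk₁)

theorem center_eq_bot : LieAlgebra.center F (MelLie F) = ⊥ := by
  refine (LieSubmodule.eq_bot_iff _).2 fun z hz => ?_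
  rw [LieModule.mem_maxTrivSubmodule] at hz
  refine eq_zero_of_lie_eq (k := 0) (hz _) (hz _) ?_ ?_ ?_ ?_
  · rw [hz, zero_smul]
  · grind
  · grind
  · grind

variable {D : LieDerivation F (MelLie F) (MelLie F)}

/-- Derivations of `M` that kill `D₁`, `D₂` and the Euler element. Such a derivation commutes with
`ad D₁` and `ad D₂` and preserves weights. -/
structure IsNormalized (D : LieDerivation F (MelLie F) (MelLie F)) : Prop where
  intro ::
  apply_D₁ : D (D₁ F) = 0
  apply_D₂ : D (D₂ F) = 0
  apply_E : D (E F) = 0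

namespace IsNormalized

variable {u : MelLie F} {k : F}

theorem lie_E_apply (hD : IsNormalized D) (hE : ⁅E F, u⁆ = k • u) : ⁅E F, D u⁆ = k • D u := by
  rw [lie_lieDerivation_apply hD.apply_E, hE, map_smul]

theorem exists_apply_eq_smul_unit (hD : IsNormalized D) (h₁ : D ⁅D₁ F, u⁆ = 0)
    (h₂ : D ⁅D₂ F, u⁆ = 0) (hE : ⁅E F, u⁆ = k • u) (hk₃ : k ≠ 3) (hk₄ : k ≠ 4) :
    ∃ c : F, D u = c • unit F :=
  exists_eq_smul_unit_of_lie_eq (by rw [lie_lieDerivation_apply hD.apply_D₁, h₁])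
    (by rw [lie_lieDerivation_apply hD.apply_D₂, h₂]) (hD.lie_E_apply hE) hk₃ hk₄

theorem apply_eq_zero (hD : IsNormalized D) (h₁ : D ⁅D₁ F, u⁆ = 0) (h₂ : D ⁅D₂ F, u⁆ = 0)
    (hE : ⁅E F, u⁆ = k • u) (hk₁ : k ≠ 1) (hk₃ : k ≠ 3) (hk₄ : k ≠ 4) : D u = 0 :=
  eq_zero_of_lie_eq (by rw [lie_lieDerivation_apply hD.apply_D₁, h₁])
    (by rw [lie_lieDerivation_apply hD.apply_D₂, h₂]) (hD.lie_E_apply hE) hk₁ hk₃ hk₄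

theorem apply_mk_x₁ (hD : IsNormalized D) {c : F} (hc : D (unit F) = c • unit F) :
    D (mk (x₁ F) 0 0 0 0) = c • mk (x₁ F) 0 0 0 0 := by
  have lie_D₁ : ⁅D₁ F, mk (x₁ F) 0 0 0 0⁆ = unit F := by simp [D₁_lie_mk, unit]
  have lie_D₂ : ⁅D₂ F, mk (x₁ F) 0 0 0 0⁆ = 0 := by simp [D₂_lie_mk, zero_eq_mk]
  have lie_E : ⁅E F, mk (x₁ F) 0 0 0 0⁆ = (2 : F) • mk (x₁ F) 0 0 0 0 := by
    simp [E_lie_mk, shiftedEuler_apply, two_smul]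
  rw [← sub_eq_zero]
  refine eq_zero_of_lie_eq (k := 2) ?_ ?_ ?_ (by grind) (by grind) (by grind)
  · rw [lie_sub, lie_smul, lie_lieDerivation_apply hD.apply_D₁, lie_D₁, hc, sub_self]
  · rw [lie_sub, lie_smul, lie_lieDerivation_apply hD.apply_D₂, lie_D₂, map_zero, smul_zero,
      sub_zero]
  · rw [lie_sub, lie_smul, hD.lie_E_apply lie_E, lie_E, smul_sub, smul_comm]

theorem apply_unit (hD : IsNormalized D) : D (unit F) = 0 := by
  obtain ⟨c, hc⟩ : ∃ c : F, D (unit F) = c • unit F :=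
    hD.exists_apply_eq_smul_unit (k := 1) (by simp [unit, D₁_lie_mk, ← zero_eq_mk])
      (by simp [unit, D₂_lie_mk, ← zero_eq_mk]) (by rw [E_lie_unit, one_smul]) (by grind) (by grind)
  set X : MelLie F := mk (x₁ F) 0 0 0 0 with hX
  have lie_lie_X : ⁅unit F, ⁅unit F, X⁆⁆ = (2 : F) • D₂ F := by
    simp only [hX, unit, D₂, lie_mk, smul_mk]
    simp [ofNat_smul_eq_nsmul F]
  have h : (6 * c) • D₂ F = 0 := calc
    (6 * c) • D₂ F = (3 * c) • ⁅unit F, ⁅unit F, X⁆⁆ := by rw [lie_lie_X]; module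
    _ = D ⁅unit F, ⁅unit F, X⁆⁆ := by
      rw [LieDerivation.apply_lie_eq_add, LieDerivation.apply_lie_eq_add, hc, hD.apply_mk_x₁ hc]
      simp only [lie_add, lie_smul, smul_lie]
      module
    _ = 0 := by rw [lie_lie_X, map_smul, hD.apply_D₂, smul_zero]
  have hD₂ : D₂ F ≠ 0 := by simp [D₂, zero_eq_mk]
  have : c = 0 := by grind [(smul_eq_zero.1 h).resolve_right hD₂]
  rw [hc, this, zero_smul]

theorem apply_x₁D₁ (hD : IsNormalized D) : D (mk 0 (x₁ F) 0 0 0) = 0 := by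
  refine hD.apply_eq_zero (k := 0) ?_ ?_ ?_ (by grind) (by grind) (by grind)
  · simp only [D₁_lie_mk, map_zero, pd₁_x₁]
    exact hD.apply_D₁
  · simp [D₂_lie_mk, ← zero_eq_mk]
  · simpa using E_lie_x₁_pow_D₁ (F := F) 1

theorem apply_x₂D₂ (hD : IsNormalized D) : D (mk 0 0 (x₂ F) 0 0) = 0 := by
  refine hD.apply_eq_zero (k := 0) ?_ ?_ ?_ (by grind) (by grind) (by grind)
  · simp [D₁_lie_mk, ← zero_eq_mk]
  · simp only [D₂_lie_mk, map_zero, pd₂_x₂]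
    exact hD.apply_D₂
  · simpa using E_lie_x₂_pow_D₂ (F := F) 1

theorem apply_x₁_sq_D₁ (hD : IsNormalized D) : D (mk 0 (x₁ F ^ 2) 0 0 0) = 0 := by
  obtain ⟨c, hc⟩ : ∃ c : F, D (mk 0 (x₁ F ^ 2) 0 0 0) = c • unit F := by
    refine hD.exists_apply_eq_smul_unit (k := 1) ?_ ?_ ?_ (by grind) (by grind)
    · have : ⁅D₁ F, mk 0 (x₁ F ^ 2) 0 0 0⁆ = (2 : F) • mk 0 (x₁ F) 0 0 0 := by
        simp [D₁_lie_mk, two_smul]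
      rw [this, map_smul, hD.apply_x₁D₁, smul_zero]
    · simp [D₂_lie_mk, ← zero_eq_mk]
    · convert E_lie_x₁_pow_D₁ (F := F) 2 using 2
      grind
  have lie_eq : ⁅mk 0 0 (x₂ F) 0 0, mk 0 (x₁ F ^ 2) 0 0 0⁆ = 0 := by
    simp [lie_mk, zero_eq_mk]
  have lie_unit : ⁅mk 0 0 (x₂ F) 0 0, unit F⁆ = (-2 : F) • unit F := by
    simp only [unit, lie_mk, smul_mk]
    simp [ofNat_smul_eq_nsmul F]
  have h := lie_lieDerivation_apply hD.apply_x₂D₂ (mk 0 (x₁ F ^ 2) 0 0 0)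
  rw [hc, lie_smul, lie_unit, lie_eq, map_zero, smul_comm] at h
  rw [hc]
  exact (smul_eq_zero.1 h).resolve_left (by grind)

theorem apply_x₂_sq_D₂ (hD : IsNormalized D) : D (mk 0 0 (x₂ F ^ 2) 0 0) = 0 := by
  obtain ⟨c, hc⟩ : ∃ c : F, D (mk 0 0 (x₂ F ^ 2) 0 0) = c • unit F := by
    refine hD.exists_apply_eq_smul_unit (k := 1) ?_ ?_ ?_ (by grind) (by grind)
    · simp [D₁_lie_mk, ← zero_eq_mk]
    · have : ⁅D₂ F, mk 0 0 (x₂ F ^ 2) 0 0⁆ = (2 : F) • mk 0 0 (x₂ F) 0 0 := by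
        simp [D₂_lie_mk, two_smul]
      rw [this, map_smul, hD.apply_x₂D₂, smul_zero]
    · convert E_lie_x₂_pow_D₂ (F := F) 2 using 2
      grind
  have lie_eq : ⁅mk 0 (x₁ F) 0 0 0, mk 0 0 (x₂ F ^ 2) 0 0⁆ = 0 := by
    simp [lie_mk, zero_eq_mk]
  have lie_unit : ⁅mk 0 (x₁ F) 0 0 0, unit F⁆ = (-2 : F) • unit F := by
    simp only [unit, lie_mk, smul_mk]
    simp [ofNat_smul_eq_nsmul F]
  have h := lie_lieDerivation_apply hD.apply_x₁D₁ (mk 0 0 (x₂ F ^ 2) 0 0)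
  rw [hc, lie_smul, lie_unit, lie_eq, map_zero, smul_comm] at h
  rw [hc]
  exact (smul_eq_zero.1 h).resolve_left (by grind)

end IsNormalized

theorem x₁_sq_D₁_lie_mk (i : ℕ) {g : TruncPoly F} (hg : pd₁ g = 0) :
    ⁅mk 0 (x₁ F ^ 2) 0 0 0, mk (x₁ F ^ i * g) 0 0 0 0⁆ =
      ((i + 1 : ℕ) : F) • mk (x₁ F ^ (i + 1) * g) 0 0 0 0 := by
  have h := x₁_mul_pd₁_x₁_pow (F := F) i
  rw [lie_mk, smul_mk, mk_inj]
  simp only [Nat.cast_smul_eq_nsmul, nsmul_eq_mul, Derivation.leibniz, hg,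
    sq, pd₁_x₁, pd₂_x₁, smul_eq_mul, map_zero]
  push_cast
  refine ⟨?_, ?_, ?_, ?_, ?_⟩ <;> grind

theorem x₂_sq_D₂_lie_mk (i : ℕ) {g : TruncPoly F} (hg : pd₂ g = 0) :
    ⁅mk 0 0 (x₂ F ^ 2) 0 0, mk (g * x₂ F ^ i) 0 0 0 0⁆ =
      ((i + 1 : ℕ) : F) • mk (g * x₂ F ^ (i + 1)) 0 0 0 0 := by
  have h := x₂_mul_pd₂_x₂_pow (F := F) i
  rw [lie_mk, smul_mk, mk_inj]
  simp only [Nat.cast_smul_eq_nsmul, nsmul_eq_mul, Derivation.leibniz, hg,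
    sq, pd₁_x₂, pd₂_x₂, smul_eq_mul, map_zero]
  push_cast
  refine ⟨?_, ?_, ?_, ?_, ?_⟩ <;> grind

variable {S : LieSubalgebra F (MelLie F)}

theorem mk_x₁_pow_mem (hS : mk 0 (x₁ F ^ 2) 0 0 0 ∈ S) {g : TruncPoly F} (hg : pd₁ g = 0)
    (h : mk g 0 0 0 0 ∈ S) (i : ℕ) : mk (x₁ F ^ i * g) 0 0 0 0 ∈ S := by
  induction i with
  | zero => rwa [pow_zero, one_mul]
  | succ i ih =>
    by_cases hi : ((i + 1 : ℕ) : F) = 0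
    · rw [pow_eq_zero_of_natCast_eq_zero x₁_pow_five i.succ_ne_zero hi, zero_mul]
      exact S.zero_mem
    · have := S.smul_mem ((i + 1 : ℕ) : F)⁻¹ (S.lie_mem hS ih)
      rwa [x₁_sq_D₁_lie_mk i hg, inv_smul_smul₀ hi] at this

theorem mk_x₂_pow_mem (hS : mk 0 0 (x₂ F ^ 2) 0 0 ∈ S) {g : TruncPoly F} (hg : pd₂ g = 0)
    (h : mk g 0 0 0 0 ∈ S) (i : ℕ) : mk (g * x₂ F ^ i) 0 0 0 0 ∈ S := by
  induction i with
  | zero => rwa [pow_zero, mul_one]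
  | succ i ih =>
    by_cases hi : ((i + 1 : ℕ) : F) = 0
    · rw [pow_eq_zero_of_natCast_eq_zero x₂_pow_five i.succ_ne_zero hi, mul_zero]
      exact S.zero_mem
    · have := S.smul_mem ((i + 1 : ℕ) : F)⁻¹ (S.lie_mem hS ih)
      rwa [x₂_sq_D₂_lie_mk i hg, inv_smul_smul₀ hi] at this

theorem mk_A_mem (h_unit : unit F ∈ S) (hx₁ : mk 0 (x₁ F ^ 2) 0 0 0 ∈ S)
    (hx₂ : mk 0 0 (x₂ F ^ 2) 0 0 ∈ S) (f : TruncPoly F) : mk f 0 0 0 0 ∈ S := by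
  let ι : TruncPoly F →ₗ[F] MelLie F := LinearMap.inl F _ _
  refine mem_of_monomials_mem (S.toSubmodule.comap ι) (fun i j => ?_) f
  have x₂_pow_mem : mk (x₂ F ^ j) 0 0 0 0 ∈ S := by
    simpa only [one_mul] using mk_x₂_pow_mem hx₂ pd₂.map_one_eq_zero h_unit j
  exact mk_x₁_pow_mem hx₁ (pd₁_x₂_pow j) x₂_pow_mem i

theorem eq_top_of_mk_A_mem (hS : ∀ f, mk f 0 0 0 0 ∈ S) : S = ⊤ := by
  have hD₁' (f : TruncPoly F) : mk 0 0 0 f 0 ∈ S := by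
    have : ⁅mk f 0 0 0 0, mk (x₂ F) 0 0 0 0⁆ +
          ⁅mk (1 : TruncPoly F) 0 0 0 0, mk (x₂ F * f) 0 0 0 0⁆ =
        mk 0 0 0 f 0 := by
      simp only [lie_mk, pd₁_x₂, pd₂_x₂, Derivation.leibniz, Derivation.map_one_eq_zero,
        smul_eq_mul, map_zero, mk_add_mk, mk_inj]
      grind
    exact this ▸ S.add_mem (S.lie_mem (hS _) (hS _)) (S.lie_mem (hS _) (hS _))
  have hD₂' (f : TruncPoly F) : mk 0 0 0 0 f ∈ S := by
    have : ⁅mk (x₁ F) 0 0 0 0, mk f 0 0 0 0⁆ +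
          ⁅mk (x₁ F * f) 0 0 0 0, mk (1 : TruncPoly F) 0 0 0 0⁆ =
        mk 0 0 0 0 f := by
      simp only [lie_mk, pd₁_x₁, pd₂_x₁, Derivation.leibniz, Derivation.map_one_eq_zero,
        smul_eq_mul, map_zero, mk_add_mk, mk_inj]
      grind
    exact this ▸ S.add_mem (S.lie_mem (hS _) (hS _)) (S.lie_mem (hS _) (hS _))
  have hD₁ (f : TruncPoly F) : mk 0 f 0 0 0 ∈ S := by
    have : ⁅mk (1 : TruncPoly F) 0 0 0 0, mk 0 0 0 f 0⁆ = mk 0 f 0 0 0 := by simp [lie_mk]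
    exact this ▸ S.lie_mem (hS 1) (hD₁' f)
  have hD₂ (f : TruncPoly F) : mk 0 0 f 0 0 ∈ S := by
    have : ⁅mk (1 : TruncPoly F) 0 0 0 0, mk 0 0 0 0 f⁆ = mk 0 0 f 0 0 := by simp [lie_mk]
    exact this ▸ S.lie_mem (hS 1) (hD₂' f)
  refine eq_top_iff.2 fun u _ => ?_
  induction u with | mk f g₁ g₂ h₁ h₂
  simpa using S.add_mem (S.add_mem (S.add_mem (S.add_mem (hS f) (hD₁ g₁)) (hD₂ g₂)) (hD₁' h₁))
    (hD₂' h₂)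

theorem lieSpan_generators_eq_top :
    LieSubalgebra.lieSpan F (MelLie F) {unit F, mk 0 (x₁ F ^ 2) 0 0 0, mk 0 0 (x₂ F ^ 2) 0 0} = ⊤ :=
  eq_top_of_mk_A_mem <| mk_A_mem (LieSubalgebra.subset_lieSpan (by simp))
    (LieSubalgebra.subset_lieSpan (by simp)) (LieSubalgebra.subset_lieSpan (by simp))

theorem IsNormalized.eq_zero (hD : IsNormalized D) : D = 0 :=
  LieDerivation.ext_of_lieSpan_eq_top _ lieSpan_generators_eq_top <| by
    rintro _ (rfl | rfl | rfl)
    · exact hD.apply_unit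
    · exact hD.apply_x₁_sq_D₁
    · exact hD.apply_x₂_sq_D₂

variable (D) in
theorem exists_sub_ad_apply_E_eq_zero : ∃ m, (D - LieDerivation.ad F (MelLie F) m) (E F) = 0 := by
  have : Fact (Nat.Prime 5) := ⟨Nat.prime_five⟩
  obtain ⟨m, hm⟩ := exists_sub_ad_apply_mem_center 5 ad_E_pow_five D
  rw [center_eq_bot, LieSubmodule.mem_bot] at hm
  exact ⟨m, hm⟩

theorem exists_isNormalized_sub_ad (hE : D (E F) = 0) :
    ∃ w, IsNormalized (D - LieDerivation.ad F (MelLie F) w) := by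
  have lie_E {z : MelLie F} (hz : ⁅E F, z⁆ = -z) : ⁅E F, D z⁆ = -D z := by
    rw [lie_lieDerivation_apply hE, hz, map_neg]
  have compat : ⁅D₁ F, D (D₂ F)⁆ = ⁅D₂ F, D (D₁ F)⁆ := by
    rw [← sub_eq_zero, ← LieDerivation.apply_lie_eq_sub, D₁_lie_D₂, map_zero]
  obtain ⟨w, w₁, w₂, w₀⟩ := exists_D₁_D₂_primitive (lie_E E_lie_D₁) (lie_E E_lie_D₂) compat
  refine ⟨-w, ?_, ?_, ?_⟩ <;>
    rw [LieDerivation.sub_apply, LieDerivation.ad_apply_apply, neg_lie, lie_skew]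
  · rw [w₁, sub_self]
  · rw [w₂, sub_self]
  · rw [w₀, hE, sub_self]

variable (D) in
theorem exists_eq_ad : ∃ m, D = LieDerivation.ad F (MelLie F) m := by
  obtain ⟨m, hm⟩ := exists_sub_ad_apply_E_eq_zero D
  obtain ⟨w, hw⟩ := exists_isNormalized_sub_ad hm
  refine ⟨m + w, ?_⟩
  rw [map_add, ← sub_eq_zero, ← sub_sub, hw.eq_zero]

end MelLie

/-- The first cohomology of the Melikian algebra with values in the adjoint
representation vanishes: every derivation of `M` is inner. -/
theorem melikian_H1 (F : Type*) [Field F] [CharP F 5] :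
    ∀ D : Mel F →ₗ[F] Mel F,
      (∀ x y : Mel F, D (brM x y) = brM (D x) y + brM x (D y)) →
      ∃ m : Mel F, ∀ x : Mel F, D x = brM m x := by
  intro D hD
  let D' : LieDerivation F (MelLie F) (MelLie F) :=
    { toLinearMap := (D : MelLie F →ₗ[F] MelLie F)
      leibniz' := fun x y => by
        rw [sub_eq_add_neg, lie_skew, add_comm]
        exact hD x y }
  obtain ⟨m, hm⟩ := MelLie.exists_eq_ad D'
  exact ⟨m, fun x => (DFunLike.congr_fun hm x).trans (LieDerivation.ad_apply_apply ..)⟩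

end Melikian
end
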